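/- arXiv:2407.20154 — 3 statements merged into one kernel-verified Lean document; each statement's English description precedes it below -/
import Mathlib

section
/- For every k-algebra A over a field k, the structure map H_cf(A) → A of the cofree Hopf algebra on A is surjective. -/
open TensorProduct

universe u

namespace Paper

variable (k : Type u) [Field k]

/-- Elementary packaging of the cofree coalgebra on a vector space `V`: a coalgebra
`C` with a linear structure map `π : C → V` through which every linear map from a
coalgebra factors by a unique coalgebra morphism.  This is exactly the statement
that `V ↦ C` is right adjoint to the forgetful functor from coalgebras to vector
spaces. -/
structure CofreeCoalgebraOn (V : Type u) [AddCommGroup V] [Module k V] :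
    Type (u + 1) where
  C : Type u
  [addCommGroup : AddCommGroup C]
  [module : Module k C]
  [coalgebra : Coalgebra k C]
  π : C →ₗ[k] V
  lift : ∀ (D : Type u) [AddCommGroup D] [Module k D] [Coalgebra k D]
    (f : D →ₗ[k] V), ∃! g : D →ₗc[k] C, ∀ d : D, π (g d) = f d

attribute [instance] CofreeCoalgebraOn.addCommGroup CofreeCoalgebraOn.module
  CofreeCoalgebraOn.coalgebra

/-- Elementary packaging of the cofree bialgebra on an algebra `A`: a bialgebra `B`
with an algebra structure map `π : B → A` through which every algebra map from a
bialgebra factors by a unique bialgebra morphism. -/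
structure CofreeBialgebraOn (A : Type u) [Ring A] [Algebra k A] : Type (u + 1) where
  B : Type u
  [ring : Ring B]
  [bialgebra : Bialgebra k B]
  π : B →ₐ[k] A
  lift : ∀ (D : Type u) [Ring D] [Bialgebra k D] (f : D →ₐ[k] A),
    ∃! g : D →ₐc[k] B, ∀ d : D, π (g d) = f d

attribute [instance] CofreeBialgebraOn.ring CofreeBialgebraOn.bialgebra

/-- Elementary packaging of the cofree Hopf algebra on a bialgebra `B`: a Hopf
algebra `H` with a bialgebra structure map `π : H → B` through which every
bialgebra map from a Hopf algebra factors uniquely. -/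
structure CofreeHopfOnBialgebra (B : Type u) [Ring B] [Bialgebra k B] :
    Type (u + 1) where
  H : Type u
  [ring : Ring H]
  [hopfAlgebra : HopfAlgebra k H]
  π : H →ₐc[k] B
  lift : ∀ (D : Type u) [Ring D] [HopfAlgebra k D] (f : D →ₐc[k] B),
    ∃! g : D →ₐc[k] H, ∀ d : D, π (g d) = f d

attribute [instance] CofreeHopfOnBialgebra.ring CofreeHopfOnBialgebra.hopfAlgebra

/-- Elementary packaging of the cofree Hopf algebra on an algebra `A`: a Hopf
algebra `H` with an algebra structure map `π : H → A` through which every algebra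
map from a Hopf algebra factors by a unique morphism of Hopf algebras. -/
structure CofreeHopfOnAlgebra (A : Type u) [Ring A] [Algebra k A] :
    Type (u + 1) where
  H : Type u
  [ring : Ring H]
  [hopfAlgebra : HopfAlgebra k H]
  π : H →ₐ[k] A
  lift : ∀ (D : Type u) [Ring D] [HopfAlgebra k D] (f : D →ₐ[k] A),
    ∃! g : D →ₐc[k] H, ∀ d : D, π (g d) = f d

attribute [instance] CofreeHopfOnAlgebra.ring CofreeHopfOnAlgebra.hopfAlgebra

end Paper

open Paper

/-!
The symmetric algebra on one generator `t` is the polynomial algebra `k[t]`, a Hopf algebra in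
which `t` is primitive. Each `a : A` is the image of `t` under some algebra map `k[t] → A`, and the
universal property factors this map through the structure map, which therefore hits `a`.
-/

section SymmetricAlgebra

open SymmetricAlgebra

variable {R : Type*} [CommRing R]

/-- The Hopf algebra structure on the symmetric algebra of `M`, extending Mathlib's bialgebra
structure, in which every element of `M` is primitive; the antipode is `-1` on `M`. -/
noncomputable instance symmetricAlgebraHopfAlgebra (M : Type*) [AddCommMonoid M] [Module R M] :
    HopfAlgebra R (SymmetricAlgebra R M) :=
  HopfAlgebra.ofAlgHom (lift (-ι R M))
    -- The `Commute` proof that `ofAlgHom` puts into this `lift` keeps `lift_tmul` from firing.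
    (by rw [← Algebra.TensorProduct.lmul'_comp_map]; ext x; simp [algebraMapInv_ι])
    (by ext x; simp [algebraMapInv_ι])

variable {A : Type*} [Semiring A] [Algebra R A]

theorem exists_symmetricAlgebra_algHom_ι_one_eq (a : A) :
    ∃ f : SymmetricAlgebra R R →ₐ[R] A, f (ι R R 1) = a := by
  -- `lift` needs a commutative target, which `A` need not be, so the map goes through `R[X]`.
  let toPolynomial : SymmetricAlgebra R R →ₐ[R] Polynomial R :=
    lift (LinearMap.toSpanSingleton R (Polynomial R) Polynomial.X)
  exact ⟨(Polynomial.aeval a).comp toPolynomial, by simp [toPolynomial]⟩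

end SymmetricAlgebra

theorem cofreeHopf_structure_map_surjective_general {R : Type u} [CommRing R]
    {A H : Type*} [Semiring A] [Algebra R A] [Semiring H] [Bialgebra R H] (π : H →ₐ[R] A)
    (lift : ∀ (D : Type u) [CommRing D] [HopfAlgebra R D] [Coalgebra.IsCocomm R D]
      (f : D →ₐ[R] A), ∃ g : D →ₐc[R] H, ∀ d : D, π (g d) = f d) :
    Function.Surjective π := by
  intro a
  obtain ⟨f, hf⟩ := exists_symmetricAlgebra_algHom_ι_one_eq (R := R) a
  obtain ⟨g, hg⟩ := lift (SymmetricAlgebra R R) f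
  exact ⟨g (SymmetricAlgebra.ι R R 1), (hg _).trans hf⟩

/-- **Lemma.** For every `k`-algebra `A`, the structure map `H_cf(A) → A` of the
cofree Hopf algebra on `A` (the value at `A` of the right adjoint of the forgetful
functor from Hopf `k`-algebras to `k`-algebras) is surjective. -/
theorem cofreeHopf_structure_map_surjective
    (k : Type u) [Field k] (A : Type u) [Ring A] [Algebra k A]
    (Q : CofreeHopfOnAlgebra k A) :
    Function.Surjective Q.π := by
  exact cofreeHopf_structure_map_surjective_general Q.π fun D _ _ _ f ↦ (Q.lift D f).exists
end

section
/- Let k be a field, H an S-affine Hopf k-algebra, A a k-algebra, and k ≤ k' a field extension. Then every k-algebra morphism H → A ⊗_k k' factors through the k-subalgebra A ⊗_k k'' ⊆ A ⊗_k k' for some intermediate field k ≤ k'' ≤ k' that is finitely generated as a field extension of k. -/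
open TensorProduct

universe u

namespace Paper

/-- A Hopf algebra is S-affine (antipode-affine) if it is generated as an algebra by
the images of a finite subset under the iterates of the antipode. -/
def IsSAffine (k : Type u) (H : Type u) [CommRing k] [Ring H] [HopfAlgebra k H] : Prop :=
  ∃ F : Finset H,
    Algebra.adjoin k
      (⋃ n : ℕ, (fun h => HopfAlgebra.antipode (R := k) (A := H) h)^[n] '' (F : Set H)) = ⊤

end Paper

open Paper

/-! Every `h : H` lies in a finite-dimensional subcomodule of `H`; the coaction on a basis of it
gives a square matrix `X` over `H` whose entries span `h` and whose inverse is its entrywise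
antipode `S X`. If `f X` has entries in `B = A ⊗ k''`, so does its inverse `f (S X)`: a `k''`-linear
retraction of `k'` onto `k''` induces a left `B`-linear retraction of `A ⊗ k'` onto `B`, which fixes
the entries of the inverse of a matrix over `B`. As `S` reverses products, the transpose of `S X` is
again inverted by its entrywise antipode, so the argument iterates over all powers of `S`. Hence it
suffices that `k''` contains the coefficients of the entries of `f X` for the finitely many matrices
`X` attached to the generators. -/

namespace Paper

section Coalgebra

open Coalgebra

section HitAction

variable {R C : Type*} [CommSemiring R] [AddCommMonoid C] [Module R C] [Coalgebra R C]

lemma comul_rid_lTensor {M : Type*} [AddCommMonoid M] [Module R M] (φ : M →ₗ[R] R)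
    (t : C ⊗[R] M) :
    comul (TensorProduct.rid R C (φ.lTensor C t)) =
      ((TensorProduct.rid R C).toLinearMap ∘ₗ φ.lTensor C).lTensor C
        (TensorProduct.assoc R C C M (comul.rTensor M t)) := by
  induction t with
  | zero => simp
  | add t₁ t₂ h₁ h₂ => simp only [map_add, h₁, h₂]
  | tmul x y =>
    simp only [LinearMap.lTensor_tmul, LinearMap.rTensor_tmul, TensorProduct.rid_tmul, map_smul]
    induction comul (R := R) x with
    | zero => simp
    | add u₁ u₂ h₁ h₂ => simp only [smul_add, TensorProduct.add_tmul, map_add, h₁, h₂]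
    | tmul x₁ x₂ => simp

/-- The left hit action `φ ⇀ a = ∑ φ(a₂) a₁` of a functional `φ` on a coalgebra; it is used to cut
out finite-dimensional subcomodules. -/
noncomputable def leftHit (φ : C →ₗ[R] R) : C →ₗ[R] C :=
  (TensorProduct.rid R C).toLinearMap ∘ₗ φ.lTensor C ∘ₗ comul

lemma leftHit_counit (a : C) : leftHit (counit (R := R)) a = a := by
  simp [leftHit]

lemma comul_leftHit (φ : C →ₗ[R] R) (a : C) :
    comul (leftHit φ a) = (leftHit φ).lTensor C (comul (R := R) a) := by
  calc comul (leftHit φ a)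
      = ((TensorProduct.rid R C).toLinearMap ∘ₗ φ.lTensor C).lTensor C
          (comul.lTensor C (comul (R := R) a)) := by
        rw [← coassoc_apply]
        exact comul_rid_lTensor φ (comul a)
    _ = (leftHit φ).lTensor C (comul (R := R) a) := by
        rw [← LinearMap.comp_apply, ← LinearMap.lTensor_comp]
        rfl

end HitAction

lemma exists_fg_subcomodule {R C : Type*} [CommRing R] [AddCommGroup C] [Module R C]
    [Coalgebra R C] [Module.Free R C] (a : C) :
    ∃ V : Submodule R C, V.FG ∧ a ∈ V ∧
      ∀ v ∈ V, comul v ∈ LinearMap.range (V.subtype.rTensor C) := by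
  classical
  let b := Module.Free.chooseBasis R C
  let coeff := TensorProduct.equivFinsuppOfBasisRight b (comul (R := R) a)
  let V := Submodule.span R (Set.range coeff)
  have coeff_eq (i) : coeff i = leftHit (b.coord i) a :=
    TensorProduct.equivFinsuppOfBasisRight_apply ..
  have comul_eq : comul a = coeff.sum fun i c => c ⊗ₜ[R] b i := by
    rw [← TensorProduct.equivFinsuppOfBasisRight_symm_apply, LinearEquiv.symm_apply_apply]
  have coeff_mem (i) : coeff i ∈ V := Submodule.subset_span ⟨i, rfl⟩
  refine ⟨V, Submodule.fg_span (Finsupp.finite_range coeff), ?_, ?_⟩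
  · rw [← leftHit_counit (R := R) a, leftHit, LinearMap.comp_apply, LinearMap.comp_apply, comul_eq]
    simp only [Finsupp.sum, map_sum, LinearMap.lTensor_tmul, LinearEquiv.coe_coe,
      TensorProduct.rid_tmul]
    exact V.sum_mem fun i _ => V.smul_mem _ (coeff_mem i)
  · suffices V ≤ (LinearMap.range (V.subtype.rTensor C)).comap (comul (R := R)) from this
    refine Submodule.span_le.2 ?_
    rintro _ ⟨j, rfl⟩
    rw [SetLike.mem_coe, Submodule.mem_comap, coeff_eq, comul_leftHit, comul_eq, map_finsuppSum]
    exact Submodule.sum_mem _ fun i _ => ⟨⟨coeff i, coeff_mem i⟩ ⊗ₜ leftHit (b.coord j) (b i), rfl⟩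

lemma sum_tmul_injective_of_linearIndependent {k M N ι : Type*} [Field k] [AddCommGroup M]
    [Module k M] [AddCommMonoid N] [Module k N] [Fintype ι] {e : ι → M}
    (he : LinearIndependent k e) :
    Function.Injective fun x : ι → N => ∑ i, e i ⊗ₜ[k] x i := by
  classical
  intro x y hxy
  ext l
  obtain ⟨φ, hφ⟩ := LinearMap.exists_extend (Finsupp.lapply l ∘ₗ he.repr)
  have φ_apply (i) : φ (e i) = if l = i then 1 else 0 := by
    have := LinearMap.congr_fun hφ ⟨e i, Submodule.subset_span ⟨i, rfl⟩⟩
    have repr_e := he.repr_eq_single i ⟨e i, Submodule.subset_span ⟨i, rfl⟩⟩ rfl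
    simpa [repr_e, Finsupp.single_apply, eq_comm (a := i)] using this
  have := congrArg ((TensorProduct.lid k N).toLinearMap ∘ₗ φ.rTensor N) hxy
  simpa [φ_apply] using this

/-- A matrix over a coalgebra is multiplicative if `Δ cᵢⱼ = ∑ₗ cᵢₗ ⊗ cₗⱼ` and `ε cᵢⱼ = δᵢⱼ`,
as holds for the coefficients of a finite-dimensional comodule. -/
structure IsMultiplicativeMatrix (R : Type*) {C n : Type*} [CommSemiring R] [AddCommMonoid C]
    [Module R C] [Coalgebra R C] [Fintype n] [DecidableEq n] (c : Matrix n n C) : Prop where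
  comul_apply : ∀ i j, comul (c i j) = ∑ l, c i l ⊗ₜ[R] c l j
  counit_apply : ∀ i j, counit (R := R) (c i j) = (1 : Matrix n n R) i j

lemma isMultiplicativeMatrix_of_comul_eq {k C n : Type*} [Field k] [AddCommGroup C] [Module k C]
    [Coalgebra k C] [Fintype n] [DecidableEq n] {e : n → C} {c : Matrix n n C}
    (he : LinearIndependent k e) (hc : ∀ j, comul (e j) = ∑ i, e i ⊗ₜ[k] c i j) :
    IsMultiplicativeMatrix k c where
  comul_apply i j := by
    have coassoc_e : ∑ i, e i ⊗ₜ[k] comul (R := k) (c i j) =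
        ∑ i, e i ⊗ₜ[k] ∑ l, c i l ⊗ₜ[k] c l j := by
      have := coassoc_apply (R := k) (e j)
      simp only [hc, map_sum, LinearMap.rTensor_tmul, LinearMap.lTensor_tmul,
        TensorProduct.sum_tmul, TensorProduct.assoc_tmul] at this
      rw [← this, Finset.sum_comm]
      simp only [TensorProduct.tmul_sum]
    exact congrFun (sum_tmul_injective_of_linearIndependent he coassoc_e) i
  counit_apply i j := by
    have counit_e : ∑ i, e i ⊗ₜ[k] counit (R := k) (c i j) =
        ∑ i, e i ⊗ₜ[k] (1 : Matrix n n k) i j := by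
      have := lTensor_counit_comul (R := k) (e j)
      simp only [hc, map_sum, LinearMap.lTensor_tmul] at this
      rw [this]
      simp [Matrix.one_apply, TensorProduct.tmul_ite]
    exact congrFun (sum_tmul_injective_of_linearIndependent he counit_e) i

lemma mem_span_of_comul_eq {R C n : Type*} [CommSemiring R] [AddCommMonoid C] [Module R C]
    [Coalgebra R C] [Fintype n] {e : n → C} {c : Matrix n n C}
    (hc : ∀ j, comul (e j) = ∑ i, e i ⊗ₜ[R] c i j) (j : n) :
    e j ∈ Submodule.span R (Set.range fun p : n × n => c p.1 p.2) := by
  have := congrArg (TensorProduct.lid R C) (rTensor_counit_comul (R := R) (e j))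
  simp only [hc, map_sum, LinearMap.rTensor_tmul, TensorProduct.lid_tmul, one_smul] at this
  rw [← this]
  exact Submodule.sum_mem _ fun i _ => Submodule.smul_mem _ _ (Submodule.subset_span ⟨(i, j), rfl⟩)

theorem exists_isMultiplicativeMatrix_mem_span {k C : Type*} [Field k] [AddCommGroup C]
    [Module k C] [Coalgebra k C] (a : C) :
    ∃ (d : ℕ) (c : Matrix (Fin d) (Fin d) C), IsMultiplicativeMatrix k c ∧
      a ∈ Submodule.span k (Set.range fun p : Fin d × Fin d => c p.1 p.2) := by
  obtain ⟨V, V_fg, a_mem, hV⟩ := exists_fg_subcomodule (R := k) a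
  have : Module.Finite k V := .of_fg V_fg
  let b := Module.finBasis k V
  have exists_coeff (j) :
      ∃ x : Fin (Module.finrank k V) → C, comul (b j : C) = ∑ i, (b i : C) ⊗ₜ[k] x i := by
    obtain ⟨t, ht⟩ := hV (b j) (b j).2
    obtain ⟨x, rfl⟩ := TensorProduct.eq_repr_basis_left b t
    exact ⟨x, by rw [← ht, Finsupp.sum_fintype _ _ (by simp)]; simp⟩
  choose x hx using exists_coeff
  let c : Matrix _ _ C := .of fun i j => x j i
  refine ⟨_, c, isMultiplicativeMatrix_of_comul_eq
    (b.linearIndependent.map' V.subtype V.ker_subtype) hx, ?_⟩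
  have a_eq : a = ∑ j, b.repr ⟨a, a_mem⟩ j • (b j : C) := by
    have := congrArg V.subtype (b.sum_repr ⟨a, a_mem⟩)
    simpa only [map_sum, map_smul, Submodule.subtype_apply] using this.symm
  rw [a_eq]
  exact Submodule.sum_mem _ fun j _ => Submodule.smul_mem _ _ (mem_span_of_comul_eq hx j)

end Coalgebra

section Antipode

open scoped Matrix

open HopfAlgebra Coalgebra

variable {R H n : Type*} [CommSemiring R] [Semiring H] [HopfAlgebra R H] [Fintype n]

lemma transpose_map_antipode_mul {l m : Type*} (X : Matrix l n H) (Y : Matrix n m H) :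
    ((X * Y).map (antipode R))ᵀ = (Y.map (antipode R))ᵀ * (X.map (antipode R))ᵀ := by
  ext i j
  simp [Matrix.mul_apply, antipode_mul_antidistrib]

variable [DecidableEq n] {X : Matrix n n H}

/-- The matrix `X` over a Hopf algebra is invertible, with inverse its entrywise antipode `S X`.
This is the property of multiplicative matrices that is carried along the powers of `S`. -/
structure IsInvertedByAntipode (R : Type*) {H n : Type*} [CommSemiring R] [Semiring H]
    [HopfAlgebra R H] [Fintype n] [DecidableEq n] (X : Matrix n n H) : Prop where
  mul_map_antipode : X * X.map (antipode R) = 1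
  map_antipode_mul : X.map (antipode R) * X = 1

lemma IsMultiplicativeMatrix.isInvertedByAntipode (hX : IsMultiplicativeMatrix R X) :
    IsInvertedByAntipode R X := by
  let repr (i j : n) : Repr R (X i j) n :=
    ⟨Finset.univ, fun l => X i l, fun l => X l j, (hX.comul_apply i j).symm⟩
  have algebraMap_counit (i j : n) :
      algebraMap R H (counit (X i j)) = (1 : Matrix n n H) i j := by
    rw [hX.counit_apply, Matrix.one_apply, Matrix.one_apply, apply_ite (algebraMap R H),
      map_one, map_zero]
  constructor <;> ext i j
  · exact (sum_mul_antipode_eq_algebraMap_counit (repr i j)).trans (algebraMap_counit i j)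
  · exact (sum_antipode_mul_eq_algebraMap_counit (repr i j)).trans (algebraMap_counit i j)

lemma IsInvertedByAntipode.transpose_map_antipode (hX : IsInvertedByAntipode R X) :
    IsInvertedByAntipode R (X.map (antipode R))ᵀ where
  mul_map_antipode := by
    rw [Matrix.transpose_map, ← transpose_map_antipode_mul, hX.map_antipode_mul]
    simp
  map_antipode_mul := by
    rw [Matrix.transpose_map, ← transpose_map_antipode_mul, hX.mul_map_antipode]
    simp

end Antipode

section Retraction

variable {k B R : Type*} [CommSemiring k] [Semiring B] [Algebra k B] [Semiring R] [Algebra k R]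

/-- `p` is a unital retraction of `R` onto `B` as left `B`-modules, where `B` acts on `R` through
`φ`. -/
structure IsLeftRetraction (φ : B →ₐ[k] R) (p : R →ₗ[k] B) : Prop where
  map_one : p 1 = 1
  map_mul : ∀ b r, p (φ b * r) = b * p r

lemma exists_isLeftRetraction {k K L : Type*} [CommSemiring k] [Field K] [Algebra k K]
    [Ring L] [Nontrivial L] [Algebra k L] (φ : K →ₐ[k] L) :
    ∃ p : L →ₗ[k] K, IsLeftRetraction φ p := by
  let : Module K L := Module.compHom L (φ : K →+* L)
  have : IsScalarTower k K L := ⟨fun r x y => by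
    change φ (r • x) * y = r • (φ x * y)
    rw [map_smul, smul_mul_assoc]⟩
  obtain ⟨p, hp⟩ := LinearMap.exists_leftInverse_of_injective (LinearMap.toSpanSingleton K L 1)
    (LinearMap.ker_toSpanSingleton K one_ne_zero)
  refine ⟨p.restrictScalars k, ?_, fun x y => p.map_smul x y⟩
  simpa using LinearMap.congr_fun hp 1

namespace IsLeftRetraction

variable {φ : B →ₐ[k] R} {p : R →ₗ[k] B}

lemma lTensor (hp : IsLeftRetraction φ p) (A : Type*) [Semiring A] [Algebra k A] :
    IsLeftRetraction (Algebra.TensorProduct.map (AlgHom.id k A) φ) (p.lTensor A) where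
  map_one := by simp [Algebra.TensorProduct.one_def, hp.map_one]
  map_mul x y := by
    induction x with
    | zero => simp
    | add x₁ x₂ h₁ h₂ => simp only [map_add, add_mul, h₁, h₂]
    | tmul a b =>
      induction y with
      | zero => simp
      | add y₁ y₂ h₁ h₂ => simp only [map_add, mul_add, h₁, h₂]
      | tmul a₁ r => simp [hp.map_mul]

/-- For `X = φ Y`, left linearity gives `X * φ (p X⁻¹) = φ (p (X * X⁻¹)) = 1`. -/
lemma inverse_mem_range {n : Type*} [Fintype n] [DecidableEq n] (hp : IsLeftRetraction φ p)
    {X X' : Matrix n n R} (hXX' : X * X' = 1) (hX'X : X' * X = 1)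
    (hX : ∀ i j, X i j ∈ φ.range) (i j : n) : X' i j ∈ φ.range := by
  choose Y hY using hX
  obtain rfl : Matrix.map (.of Y) φ = X := Matrix.ext hY
  have mul_map_p : .of Y * X'.map p = 1 := by
    have map_p_mul : (Matrix.map (.of Y) φ * X').map p = .of Y * X'.map p := by
      ext i j
      simp [Matrix.mul_apply, hp.map_mul]
    rw [← map_p_mul, hXX', Matrix.map_one _ (_root_.map_zero p) hp.map_one]
  have mul_map : Matrix.map (.of Y) φ * (X'.map p).map φ = 1 := by
    rw [← Matrix.map_mul, mul_map_p, Matrix.map_one _ (_root_.map_zero φ) (_root_.map_one φ)]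
  rw [left_inv_eq_right_inv hX'X mul_map]
  exact ⟨p (X' i j), rfl⟩

lemma map_antipode_iterate_mem_range {H n : Type*} [Semiring H] [HopfAlgebra k H] [Fintype n]
    [DecidableEq n] (hp : IsLeftRetraction φ p) (f : H →ₐ[k] R) {X : Matrix n n H}
    (hX : IsInvertedByAntipode k X) (hf : ∀ i j, f (X i j) ∈ φ.range) (m : ℕ) (i j : n) :
    f ((HopfAlgebra.antipode k)^[m] (X i j)) ∈ φ.range := by
  induction m generalizing X i j with
  | zero => exact hf i j
  | succ _ ih =>
    have mul_antipode : X.map f * (X.map (HopfAlgebra.antipode k)).map f = 1 := by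
      rw [← Matrix.map_mul, hX.mul_map_antipode, Matrix.map_one _ (map_zero f) (_root_.map_one f)]
    have antipode_mul : (X.map (HopfAlgebra.antipode k)).map f * X.map f = 1 := by
      rw [← Matrix.map_mul, hX.map_antipode_mul, Matrix.map_one _ (map_zero f) (_root_.map_one f)]
    have antipode_mem (i j : n) : f (HopfAlgebra.antipode k (X i j)) ∈ φ.range :=
      hp.inverse_mem_range mul_antipode antipode_mul hf i j
    exact ih hX.transpose_map_antipode (fun i j => antipode_mem j i) j i

lemma map_antipode_iterate_mem_range_of_mem_span {H n : Type*} [Semiring H] [HopfAlgebra k H]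
    [Fintype n] [DecidableEq n] (hp : IsLeftRetraction φ p) (f : H →ₐ[k] R) {X : Matrix n n H}
    (hX : IsInvertedByAntipode k X) (hf : ∀ i j, f (X i j) ∈ φ.range) (m : ℕ) {h : H}
    (hh : h ∈ Submodule.span k (Set.range fun q : n × n => X q.1 q.2)) :
    f ((HopfAlgebra.antipode k)^[m] h) ∈ φ.range := by
  rw [← Module.End.pow_apply]
  suffices Submodule.span k (Set.range fun q : n × n => X q.1 q.2) ≤
      (Subalgebra.toSubmodule φ.range).comap (f.toLinearMap ∘ₗ HopfAlgebra.antipode k ^ m) from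
    this hh
  refine Submodule.span_le.2 ?_
  rintro _ ⟨⟨i, j⟩, rfl⟩
  simpa [Module.End.pow_apply] using hp.map_antipode_iterate_mem_range f hX hf m i j

end IsLeftRetraction

end Retraction

lemma exists_fg_intermediateField_subset_range {k k' A : Type*} [Field k] [Field k'] [Algebra k k']
    [Semiring A] [Algebra k A] {s : Set (A ⊗[k] k')} (hs : s.Finite) :
    ∃ E : IntermediateField k k', E.FG ∧
      s ⊆ (Algebra.TensorProduct.map (AlgHom.id k A) E.val).range := by
  obtain ⟨N, N_fin, hN⟩ := TensorProduct.exists_finite_submodule_right_of_setFinite s hs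
  obtain ⟨T, hT⟩ := Module.Finite.iff_fg.1 N_fin
  let E := IntermediateField.adjoin k (T : Set k')
  have N_le : N ≤ Subalgebra.toSubmodule E.toSubalgebra :=
    hT ▸ Submodule.span_le.2 (IntermediateField.subset_adjoin k _)
  have map_inclusion (t : A ⊗[k] N) : Algebra.TensorProduct.map (AlgHom.id k A) E.val
      ((Submodule.inclusion N_le).lTensor A t) = N.subtype.lTensor A t := by
    induction t with
    | zero => simp
    | add t₁ t₂ h₁ h₂ => simp only [map_add, h₁, h₂]
    | tmul a x => simp
  refine ⟨E, IntermediateField.fg_adjoin_finset T, fun x hx => ?_⟩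
  obtain ⟨t, rfl⟩ := hN hx
  exact ⟨(Submodule.inclusion N_le).lTensor A t, map_inclusion t⟩

end Paper

/-- **Lemma.** Let `H` be an S-affine Hopf `k`-algebra, `A` a `k`-algebra and
`k ≤ k'` a field extension.  Every `k`-algebra morphism `H → A ⊗ₖ k'` factors
through the `k`-subalgebra `A ⊗ₖ k'' ⊆ A ⊗ₖ k'` for some intermediate field
`k ≤ k'' ≤ k'` which is finitely generated as a field extension of `k`. -/
theorem sAffine_algHom_factors_through_finitely_generated_subextension
    (k : Type u) [Field k] (H : Type u) [Ring H] [HopfAlgebra k H]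
    (hH : IsSAffine k H)
    (A : Type u) [Ring A] [Algebra k A]
    (k' : Type u) [Field k'] [Algebra k k']
    (f : H →ₐ[k] A ⊗[k] k') :
    ∃ k'' : IntermediateField k k', k''.FG ∧
      ∀ h : H, f h ∈ (Algebra.TensorProduct.map (AlgHom.id k A) k''.val).range := by
  obtain ⟨F, hF⟩ := hH
  choose d X hX h_mem using exists_isMultiplicativeMatrix_mem_span (k := k) (C := H)
  have entries_finite : (⋃ h ∈ F, Set.range fun p : Fin (d h) × Fin (d h) =>
      f (X h p.1 p.2)).Finite := F.finite_toSet.biUnion fun h _ => Set.finite_range _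
  obtain ⟨E, E_fg, hE⟩ := exists_fg_intermediateField_subset_range entries_finite
  obtain ⟨p, hp⟩ := exists_isLeftRetraction E.val
  let B := (Algebra.TensorProduct.map (AlgHom.id k A) E.val).range
  have entry_mem (h : H) (hh : h ∈ F) (i j : Fin (d h)) : f (X h i j) ∈ B :=
    hE (Set.mem_biUnion hh ⟨(i, j), rfl⟩)
  have generator_mem (n : ℕ) (h : H) (hh : h ∈ F) :
      f ((HopfAlgebra.antipode k)^[n] h) ∈ B :=
    (hp.lTensor A).map_antipode_iterate_mem_range_of_mem_span f (hX h).isInvertedByAntipode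
      (entry_mem h hh) n (h_mem h)
  have adjoin_le : Algebra.adjoin k (⋃ n : ℕ,
      (fun h => HopfAlgebra.antipode (R := k) (A := H) h)^[n] '' (F : Set H)) ≤ B.comap f := by
    refine Algebra.adjoin_le (Set.iUnion_subset fun n => ?_)
    rintro _ ⟨h, hh, rfl⟩
    exact generator_mem n h hh
  exact ⟨E, E_fg, fun h => (hF ▸ adjoin_le) (Algebra.mem_top (x := h))⟩
end

section
/- Let k ≤ k' be a field extension with k' infinite-dimensional over k, and let S be an infinite set. Then scalar extension does not preserve the finite dual of the polynomial algebra on S (commutative k[S] or free noncommutative k⟨S⟩): any k'-algebra character k'[S] → k' under which the images of the variables in S span an infinite-dimensional k-subspace of k' vanishes on no ideal of k'[S] of the form I ⊗_k k' with I a finite-codimension ideal of k[S]; consequently the canonical map k[S]° ⊗_k k' → (k'[S])° is not surjective. -/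
universe u

namespace Paper

/-- A functional on a commutative `K`-algebra lies in the finite dual if its kernel
contains an ideal of finite codimension. -/
def MemFiniteDual (K : Type u) {A : Type u} [Field K] [CommRing A] [Algebra K A]
    (f : A →ₗ[K] K) : Prop :=
  ∃ I : Ideal A, FiniteDimensional K (A ⧸ I) ∧ ∀ p ∈ I, f p = 0

end Paper

open Paper MvPolynomial

/-!
A character of `k'[S]` that kills an extended ideal `I ⊗ₖ k'` restricts to a `k`-linear map on
`k[S]` that factors through `k[S] ⧸ I`; if `I` has finite codimension, the image of that map is
finite-dimensional, and it contains the images of the variables. On the other hand, a finite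
`k'`-linear combination of extended members of `k[S]°` kills an extended ideal of finite
codimension, namely the intersection of the ideals attached to its terms. Hence a
character of `k'[S]` sending the variables to elements with infinite-dimensional `k`-span is not in
the image of `k[S]° ⊗ₖ k'`, although its kernel has codimension one. Such a character is obtained
by sending the variables onto a `k`-linearly independent sequence in `k'`.
-/

namespace Paper

section FiniteQuotient

variable {k A M N : Type*} [Ring k] [Ring A] [SMul k A] [AddCommGroup M] [Module k M] [Module A M]
  [IsScalarTower k A M] [AddCommGroup N] [Module k N]

theorem cofg_restrictScalars_iff (P : Submodule A M) :
    (P.restrictScalars k).CoFG ↔ Module.Finite k (M ⧸ P) :=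
  Module.Finite.equiv_iff (Submodule.Quotient.restrictScalarsEquiv k P)

theorem exists_mem_ne_zero_of_not_fg_range (φ : M →ₗ[k] N) (hφ : ¬ (LinearMap.range φ).FG)
    (P : Submodule A M) [hP : Module.Finite k (M ⧸ P)] : ∃ p ∈ P, φ p ≠ 0 := by
  by_contra! hzero
  have hker : P.restrictScalars k ≤ LinearMap.ker φ := hzero
  exact hφ (Submodule.range_fg_iff_ker_cofg.mpr (((cofg_restrictScalars_iff P).mpr hP).of_le hker))

theorem finite_quotient_inf [IsNoetherianRing k] (P Q : Submodule A M)
    [hP : Module.Finite k (M ⧸ P)] [hQ : Module.Finite k (M ⧸ Q)] :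
    Module.Finite k (M ⧸ P ⊓ Q) := by
  rw [← cofg_restrictScalars_iff] at hP hQ ⊢
  rw [Submodule.restrictScalars_inf]
  exact hP.inf hQ

end FiniteQuotient

theorem exists_mem_map_ne_zero_of_not_finite_span {k k' C S : Type*} [CommRing k]
    [IsNoetherianRing k] [CommSemiring k'] [Algebra k k'] [Ring C] [Algebra k C]
    (χ : MvPolynomial S k' →ₐ[k] C)
    (hχ : ¬ Module.Finite k (Submodule.span k (Set.range fun s ↦ χ (X s))))
    (I : Ideal (MvPolynomial S k)) [Module.Finite k (MvPolynomial S k ⧸ I)] :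
    ∃ p ∈ I, χ (map (algebraMap k k') p) ≠ 0 := by
  let φ : MvPolynomial S k →ₐ[k] C := χ.comp (mapAlgHom (Algebra.ofId k k'))
  have hspan : Submodule.span k (Set.range fun s ↦ χ (X s)) ≤ LinearMap.range φ.toLinearMap := by
    rw [Submodule.span_le]
    rintro _ ⟨s, rfl⟩
    exact ⟨X s, congrArg χ (map_X _ s)⟩
  have hrange : ¬ (LinearMap.range φ.toLinearMap).FG := fun hfg ↦
    hχ (Module.Finite.iff_fg.mpr (hfg.of_le hspan))
  exact exists_mem_ne_zero_of_not_fg_range φ.toLinearMap hrange I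

section CofiniteAnnihilator

variable (k : Type*) {k' A B : Type*} [CommRing k] [IsNoetherianRing k] [CommSemiring k']
  [CommRing A] [Algebra k A] [Semiring B] [Module k' B]

/-- The functionals on `B` that vanish on the image under `ι` of some ideal of `A` with finite
quotient over `k`. For `ι : A → A ⊗ₖ k'` this contains the image of `A° ⊗ₖ k'`. -/
def cofiniteAnnihilator (ι : A →+* B) : Submodule k' (Module.Dual k' B) where
  carrier := {h | ∃ I : Ideal A, Module.Finite k (A ⧸ I) ∧ ∀ p ∈ I, h (ι p) = 0}
  zero_mem' := ⟨⊤, inferInstance, fun _ _ ↦ rfl⟩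
  add_mem' := by
    rintro g h ⟨I, _, hg⟩ ⟨J, _, hh⟩
    refine ⟨I ⊓ J, finite_quotient_inf I J, fun p hp ↦ ?_⟩
    rw [LinearMap.add_apply, hg p hp.1, hh p hp.2, add_zero]
  smul_mem' := by
    rintro c h ⟨I, hI, hh⟩
    exact ⟨I, hI, fun p hp ↦ by rw [LinearMap.smul_apply, hh p hp, smul_zero]⟩

variable {k} in
theorem mem_cofiniteAnnihilator {ι : A →+* B} {h : Module.Dual k' B} :
    h ∈ cofiniteAnnihilator k ι ↔
      ∃ I : Ideal A, Module.Finite k (A ⧸ I) ∧ ∀ p ∈ I, h (ι p) = 0 :=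
  Iff.rfl

end CofiniteAnnihilator

section FiniteDual

variable {k A : Type u} [Field k] [CommRing A] [Algebra k A]

theorem memFiniteDual_toLinearMap (χ : A →ₐ[k] k) : MemFiniteDual k χ.toLinearMap :=
  ⟨RingHom.ker χ, .of_injective (Ideal.kerLiftAlg χ).toLinearMap (Ideal.kerLiftAlg_injective χ),
    fun _ hp ↦ hp⟩

theorem span_extensions_le_cofiniteAnnihilator {k' B : Type*} [CommSemiring k'] [Algebra k k']
    [Semiring B] [Module k' B] (ι : A →+* B) :
    Submodule.span k' {g : B →ₗ[k'] k' | ∃ f : A →ₗ[k] k, MemFiniteDual k f ∧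
      ∀ p, g (ι p) = algebraMap k k' (f p)} ≤ cofiniteAnnihilator k ι := by
  rw [Submodule.span_le]
  rintro g ⟨f, ⟨I, hI, hf⟩, hg⟩
  exact mem_cofiniteAnnihilator.mpr ⟨I, hI, fun p hp ↦ by rw [hg, hf p hp, map_zero]⟩

end FiniteDual

theorem exists_not_finite_span_range {k V : Type*} (S : Type*) [DivisionRing k] [AddCommGroup V]
    [Module k V] [Infinite S] (hV : ¬ Module.Finite k V) :
    ∃ a : S → V, ¬ Module.Finite k (Submodule.span k (Set.range a)) := by
  let b := Module.Basis.ofVectorSpace k V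
  have : Infinite (Module.Basis.ofVectorSpaceIndex k V) := by
    by_contra hfin
    rw [not_infinite_iff_finite] at hfin
    exact hV (.of_basis b)
  let v : ℕ → V := b ∘ Infinite.natEmbedding _
  have hv : LinearIndependent k v :=
    b.linearIndependent.comp _ (Infinite.natEmbedding _).injective
  let enum : S → ℕ := Function.invFun (Infinite.natEmbedding S)
  have henum : Function.Surjective enum :=
    Function.invFun_surjective (Infinite.natEmbedding S).injective
  refine ⟨v ∘ enum, ?_⟩
  rw [henum.range_comp]
  exact Module.not_finite_of_infinite_basis (Module.Basis.span hv)

theorem exists_character_not_finite_span {k k' : Type*} (S : Type*) [Field k] [CommRing k']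
    [Algebra k k'] [Infinite S] (hk' : ¬ Module.Finite k k') :
    ∃ χ : MvPolynomial S k' →ₐ[k'] k',
      ¬ Module.Finite k (Submodule.span k (Set.range fun s ↦ χ (X s))) := by
  obtain ⟨a, ha⟩ := exists_not_finite_span_range S hk'
  have haeval : (fun s ↦ aeval a (X s : MvPolynomial S k')) = a := funext (aeval_X a)
  exact ⟨aeval a, haeval.symm ▸ ha⟩

end Paper

/-- **Example.** Let `k ≤ k'` be a field extension with `k'` infinite-dimensional
over `k` and let `S` be an infinite set.  Then scalar extension does not preserve
the finite dual of the polynomial algebra `k[S]`: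
(1) any `k'`-algebra character `χ : k'[S] → k'` under which the images of the
variables span an infinite-dimensional `k`-subspace of `k'` vanishes on no ideal of
`k'[S]` extended from an ideal of finite codimension of `k[S]`; and
(2) consequently the canonical map `k[S]° ⊗ₖ k' → (k'[S])°` is not surjective, i.e.
some member of the finite dual of `k'[S]` is outside the `k'`-linear span of the
extensions of members of the finite dual of `k[S]`. -/
theorem polynomial_finite_dual_not_preserved
    (k k' : Type u) [Field k] [Field k'] [Algebra k k']
    (hkk' : ¬ FiniteDimensional k k')
    (S : Type u) [Infinite S] :
    (∀ χ : MvPolynomial S k' →ₐ[k'] k',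
      ¬ FiniteDimensional k
        (Submodule.span k (Set.range fun s : S => χ (X s))) →
      ∀ I : Ideal (MvPolynomial S k), FiniteDimensional k (MvPolynomial S k ⧸ I) →
        ∃ p ∈ I, χ (MvPolynomial.map (algebraMap k k') p) ≠ 0) ∧
    (∃ h : MvPolynomial S k' →ₗ[k'] k', MemFiniteDual k' h ∧
      h ∉ Submodule.span k'
        {g : MvPolynomial S k' →ₗ[k'] k' |
          ∃ f : MvPolynomial S k →ₗ[k] k, MemFiniteDual k f ∧
            ∀ p : MvPolynomial S k,
              g (MvPolynomial.map (algebraMap k k') p) = algebraMap k k' (f p)}) := by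
  refine ⟨fun χ hχ I _ ↦ exists_mem_map_ne_zero_of_not_finite_span (χ.restrictScalars k) hχ I, ?_⟩
  obtain ⟨χ, hχ⟩ := exists_character_not_finite_span S hkk'
  refine ⟨χ.toLinearMap, memFiniteDual_toLinearMap χ, fun hmem ↦ ?_⟩
  obtain ⟨I, _, hI⟩ := mem_cofiniteAnnihilator.mp
    (span_extensions_le_cofiniteAnnihilator (map (algebraMap k k')) hmem)
  obtain ⟨p, hp, hne⟩ := exists_mem_map_ne_zero_of_not_finite_span (χ.restrictScalars k) hχ I
  exact hne (hI p hp)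
end
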